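/- Let D ⊆ ℝ × ℝ be open with connected fibers, φ : D → ℝ twice continuously differentiable, and κ : ℝ → ℝ with 𝒦(x,u) = κ(x) on D. If u₀ and u₁ are two solutions of u' = φ(x,u) on the same interval I, then the difference y := u₁ − u₀ is twice differentiable and satisfies the homogeneous equation y''(x) + κ(x)·y(x) = 0 on I; moreover, if u₀ ≠ u₁ at some point of I, then y is a non-zero solution of this equation. -/

import Mathlib

/-- Partial derivative of `φ` with respect to the second (dependent) variable `u`. -/
noncomputable def pderivU (φ : ℝ × ℝ → ℝ) (x u : ℝ) : ℝ :=
  deriv (fun v => φ (x, v)) u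

/-- Partial derivative of `φ` with respect to the first (independent) variable `x`. -/
noncomputable def pderivX (φ : ℝ × ℝ → ℝ) (x u : ℝ) : ℝ :=
  deriv (fun t => φ (t, u)) x

/-- Mixed second partial derivative `∂ₓ∂ᵤφ`. -/
noncomputable def pderivXU (φ : ℝ × ℝ → ℝ) (x u : ℝ) : ℝ :=
  deriv (fun t => pderivU φ t u) x

/-- Second partial derivative `∂ᵤ∂ᵤφ`. -/
noncomputable def pderivUU (φ : ℝ × ℝ → ℝ) (x u : ℝ) : ℝ :=
  deriv (fun v => pderivU φ x v) u

/-- The curvature `𝒦(x,u) := −(∂ₓ∂ᵤφ(x,u) + (∂ᵤφ(x,u))² + φ(x,u)·∂ᵤ∂ᵤφ(x,u))`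
of the ODE `u' = φ(x,u)`. -/
noncomputable def curvature (φ : ℝ × ℝ → ℝ) (x u : ℝ) : ℝ :=
  -(pderivXU φ x u + (pderivU φ x u) ^ 2 + φ (x, u) * pderivUU φ x u)

/-!
Along a solution of `u' = φ(x,u)` the chain rule gives `u'' = A(x,u)` with `A = ∂ₓφ + φ·∂ᵤφ`, and
symmetry of the second derivative gives `∂ᵤA = -𝒦`. If `𝒦` depends on `x` alone, then `A(x,·)` is
affine with slope `-κ(x)` on the connected fiber over `x`, so
`u₁'' - u₀'' = A(x,u₁) - A(x,u₀) = -κ(x)·(u₁ - u₀)`.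
-/

lemma sub_eq_smul_of_hasDerivWithinAt_const {𝕜 G : Type*} [RCLike 𝕜] [NormedAddCommGroup G]
    [NormedSpace 𝕜 G] {f : 𝕜 → G} {c : G} {s : Set 𝕜} (hs : Convex ℝ s)
    (hf : ∀ x ∈ s, HasDerivWithinAt f c s x) {a b : 𝕜} (ha : a ∈ s) (hb : b ∈ s) :
    f b - f a = (b - a) • c := by
  have hbound := hs.norm_image_sub_le_of_norm_hasFDerivWithin_le' (C := 0)
    (φ := .toSpanSingleton 𝕜 c) (fun x hx => (hf x hx).hasFDerivWithinAt) (by simp) ha hb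
  rw [zero_mul, norm_le_zero_iff] at hbound
  exact sub_eq_zero.mp hbound

section Differentiability

variable {𝕜 E F : Type*} [NontriviallyNormedField 𝕜] [NormedAddCommGroup E] [NormedSpace 𝕜 E]
  [NormedAddCommGroup F] [NormedSpace 𝕜 F]

lemma hasDerivAt_prodMk_const (x : 𝕜) (u : E) :
    HasDerivAt (fun t => (t, u)) ((1 : 𝕜), (0 : E)) x :=
  (hasDerivAt_id x).prodMk (hasDerivAt_const x u)

lemma hasDerivAt_const_prodMk (x : E) (u : 𝕜) :
    HasDerivAt (fun v => (x, v)) ((0 : E), (1 : 𝕜)) u :=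
  (hasDerivAt_const u x).prodMk (hasDerivAt_id u)

lemma differentiableAt_fderiv_of_contDiffAt_two {f : E → F} {p : E} (hf : ContDiffAt 𝕜 2 f p) :
    DifferentiableAt 𝕜 (fderiv 𝕜 f) p :=
  (hf.fderiv_right (m := 1) le_rfl).differentiableAt one_ne_zero

end Differentiability

section Acceleration

variable {𝕜 E : Type*} [NontriviallyNormedField 𝕜] [NormedAddCommGroup E] [NormedSpace 𝕜 E]
  {φ : 𝕜 × E → E}

/-- The second derivative `∂ₓφ + ∂ᵤφ·φ` that the ODE `u' = φ(x,u)` prescribes to a solution through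
the point `p`, encoded as the derivative of `φ` at `p` in the direction `(1, φ(p))` tangent to the
graph of that solution. -/
noncomputable def acceleration (φ : 𝕜 × E → E) (p : 𝕜 × E) : E :=
  fderiv 𝕜 φ p (1, φ p)

lemma hasDerivWithinAt_velocity_of_solution {u : 𝕜 → E} {s : Set 𝕜} {x : 𝕜}
    (hφ : DifferentiableAt 𝕜 φ (x, u x)) (hu : HasDerivWithinAt u (φ (x, u x)) s x) :
    HasDerivWithinAt (fun t => φ (t, u t)) (acceleration φ (x, u x)) s x :=
  hφ.hasFDerivAt.comp_hasDerivWithinAt x ((hasDerivWithinAt_id x s).prodMk hu)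

lemma hasFDerivAt_acceleration {p : 𝕜 × E} (hφ : DifferentiableAt 𝕜 φ p)
    (hφ' : DifferentiableAt 𝕜 (fderiv 𝕜 φ) p) :
    HasFDerivAt (acceleration φ)
      (fderiv 𝕜 φ p ∘L .inr 𝕜 𝕜 E ∘L fderiv 𝕜 φ p +
        (fderiv 𝕜 (fderiv 𝕜 φ) p).flip (1, φ p)) p :=
  hφ'.hasFDerivAt.clm_apply ((hasFDerivAt_const (1 : 𝕜) p).prodMk hφ.hasFDerivAt)

end Acceleration

section Curvature

variable {φ : ℝ × ℝ → ℝ} {x u : ℝ}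

lemma pderivU_eq_fderiv (hφ : DifferentiableAt ℝ φ (x, u)) :
    pderivU φ x u = fderiv ℝ φ (x, u) (0, 1) :=
  (hφ.hasFDerivAt.comp_hasDerivAt u (hasDerivAt_const_prodMk x u)).deriv

lemma hasFDerivAt_pderivU {p : ℝ × ℝ} (hφ : ContDiffAt ℝ 2 φ p) :
    HasFDerivAt (fun q => pderivU φ q.1 q.2) ((fderiv ℝ (fderiv ℝ φ) p).flip (0, 1)) p := by
  have hpderivU : (fun q => pderivU φ q.1 q.2) =ᶠ[nhds p] fun q => fderiv ℝ φ q (0, 1) := by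
    filter_upwards [hφ.eventually (by decide)] with q hq
    exact pderivU_eq_fderiv (hq.differentiableAt two_ne_zero)
  refine HasFDerivAt.congr_of_eventuallyEq ?_ hpderivU
  simpa using (differentiableAt_fderiv_of_contDiffAt_two hφ).hasFDerivAt.clm_apply
    (hasFDerivAt_const ((0 : ℝ), (1 : ℝ)) p)

lemma pderivXU_eq_fderiv_fderiv (hφ : ContDiffAt ℝ 2 φ (x, u)) :
    pderivXU φ x u = fderiv ℝ (fderiv ℝ φ) (x, u) (1, 0) (0, 1) :=
  (HasFDerivAt.comp_hasDerivAt (f := fun t => (t, u)) x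
    (hasFDerivAt_pderivU hφ) (hasDerivAt_prodMk_const x u)).deriv

lemma pderivUU_eq_fderiv_fderiv (hφ : ContDiffAt ℝ 2 φ (x, u)) :
    pderivUU φ x u = fderiv ℝ (fderiv ℝ φ) (x, u) (0, 1) (0, 1) :=
  (HasFDerivAt.comp_hasDerivAt (f := fun v => (x, v)) u
    (hasFDerivAt_pderivU hφ) (hasDerivAt_const_prodMk x u)).deriv

lemma curvature_eq_fderiv (hφ : ContDiffAt ℝ 2 φ (x, u)) :
    curvature φ x u = -(fderiv ℝ (fderiv ℝ φ) (x, u) (1, φ (x, u)) (0, 1) +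
      fderiv ℝ φ (x, u) (0, 1) ^ 2) := by
  have hdir : ((1 : ℝ), φ (x, u)) = (1, 0) + φ (x, u) • (0, 1) := by simp
  rw [curvature, pderivXU_eq_fderiv_fderiv hφ, pderivUU_eq_fderiv_fderiv hφ,
    pderivU_eq_fderiv (hφ.differentiableAt two_ne_zero), hdir, map_add, map_smul]
  simp only [add_apply, smul_apply, smul_eq_mul]
  ring

lemma hasDerivAt_acceleration (hφ : ContDiffAt ℝ 2 φ (x, u)) :
    HasDerivAt (fun v => acceleration φ (x, v)) (-curvature φ x u) u := by
  have hA := hasFDerivAt_acceleration (hφ.differentiableAt two_ne_zero)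
    (differentiableAt_fderiv_of_contDiffAt_two hφ)
  have hsymm : fderiv ℝ (fderiv ℝ φ) (x, u) (0, 1) (1, φ (x, u)) =
      fderiv ℝ (fderiv ℝ φ) (x, u) (1, φ (x, u)) (0, 1) :=
    hφ.isSymmSndFDerivAt (by simp) _ _
  have hvert : ∀ c : ℝ, fderiv ℝ φ (x, u) (0, c) = c * fderiv ℝ φ (x, u) (0, 1) := fun c => by
    rw [← smul_eq_mul, ← map_smul, Prod.smul_mk, smul_zero, smul_eq_mul, mul_one]
  refine (hA.comp_hasDerivAt u (hasDerivAt_const_prodMk x u)).congr_deriv ?_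
  simp only [add_apply, ContinuousLinearMap.comp_apply,
    ContinuousLinearMap.inr_apply, ContinuousLinearMap.flip_apply]
  rw [hsymm, hvert, curvature_eq_fderiv hφ]
  ring

lemma acceleration_sub_eq_of_curvature_eq {s : Set ℝ} {k : ℝ} (hs : s.OrdConnected)
    (hφ : ∀ v ∈ s, ContDiffAt ℝ 2 φ (x, v)) (hk : ∀ v ∈ s, curvature φ x v = k)
    {a b : ℝ} (ha : a ∈ s) (hb : b ∈ s) :
    acceleration φ (x, b) - acceleration φ (x, a) = -(k * (b - a)) := by
  have hslope : ∀ v ∈ s, HasDerivWithinAt (fun v => acceleration φ (x, v)) (-k) s v :=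
    fun v hv => hk v hv ▸ (hasDerivAt_acceleration (hφ v hv)).hasDerivWithinAt
  rw [sub_eq_smul_of_hasDerivWithinAt_const hs.convex hslope ha hb, smul_eq_mul]
  ring

end Curvature

theorem stmt_11_general (D : Set (ℝ × ℝ)) (hD : IsOpen D)
    (hfib : ∀ x : ℝ, Set.OrdConnected {u : ℝ | (x, u) ∈ D})
    (φ : ℝ × ℝ → ℝ) (hφ : ContDiffOn ℝ 2 φ D)
    (κ : ℝ → ℝ) (hκ : ∀ x u : ℝ, (x, u) ∈ D → curvature φ x u = κ x)
    (I : Set ℝ) (u₀ u₁ : ℝ → ℝ)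
    (hu₀D : ∀ x ∈ I, (x, u₀ x) ∈ D)
    (hu₀ : ∀ x ∈ I, HasDerivWithinAt u₀ (φ (x, u₀ x)) I x)
    (hu₁D : ∀ x ∈ I, (x, u₁ x) ∈ D)
    (hu₁ : ∀ x ∈ I, HasDerivWithinAt u₁ (φ (x, u₁ x)) I x) :
    ((∀ x ∈ I, HasDerivWithinAt (fun t => u₁ t - u₀ t) (φ (x, u₁ x) - φ (x, u₀ x)) I x) ∧
      (∀ x ∈ I, HasDerivWithinAt (fun t => φ (t, u₁ t) - φ (t, u₀ t))
        (-(κ x * (u₁ x - u₀ x))) I x)) ∧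
    ((∃ x ∈ I, u₀ x ≠ u₁ x) → ∃ x ∈ I, u₁ x - u₀ x ≠ 0) := by
  have hφD : ∀ p ∈ D, ContDiffAt ℝ 2 φ p := fun p hp => hφ.contDiffAt (hD.mem_nhds hp)
  have hvelocity : ∀ u : ℝ → ℝ, ∀ x, (x, u x) ∈ D → HasDerivWithinAt u (φ (x, u x)) I x →
      HasDerivWithinAt (fun t => φ (t, u t)) (acceleration φ (x, u x)) I x :=
    fun u x hp hu =>
      hasDerivWithinAt_velocity_of_solution ((hφD _ hp).differentiableAt two_ne_zero) hu
  refine ⟨⟨fun x hx => (hu₁ x hx).sub (hu₀ x hx), fun x hx => ?_⟩,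
    fun ⟨x, hx, hne⟩ => ⟨x, hx, sub_ne_zero.mpr hne.symm⟩⟩
  rw [← acceleration_sub_eq_of_curvature_eq (hfib x) (fun v hv => hφD (x, v) hv) (hκ x)
    (hu₀D x hx) (hu₁D x hx)]
  exact (hvelocity u₁ x (hu₁D x hx) (hu₁ x hx)).sub (hvelocity u₀ x (hu₀D x hx) (hu₀ x hx))

/-- If `D` has connected fibers, `𝒦(x,u) = κ(x)` on `D`, and `u₀, u₁`
are two solutions of `u' = φ(x,u)` on the same open interval `I`, then `y := u₁ − u₀` is
twice differentiable and satisfies `y'' + κ·y = 0` on `I`; moreover if `u₀ ≠ u₁` at some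
point of `I`, then `y` is a non-zero solution. -/
theorem stmt_11 (D : Set (ℝ × ℝ)) (hD : IsOpen D)
    (hfib : ∀ x : ℝ, Set.OrdConnected {u : ℝ | (x, u) ∈ D})
    (φ : ℝ × ℝ → ℝ) (hφ : ContDiffOn ℝ 2 φ D)
    (κ : ℝ → ℝ) (hκ : ∀ x u : ℝ, (x, u) ∈ D → curvature φ x u = κ x)
    (I : Set ℝ) (hI : IsOpen I) (u₀ u₁ : ℝ → ℝ)
    (hu₀D : ∀ x ∈ I, (x, u₀ x) ∈ D) (hu₀ : ∀ x ∈ I, HasDerivAt u₀ (φ (x, u₀ x)) x)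
    (hu₁D : ∀ x ∈ I, (x, u₁ x) ∈ D) (hu₁ : ∀ x ∈ I, HasDerivAt u₁ (φ (x, u₁ x)) x) :
    ((∀ x ∈ I, HasDerivAt (fun t => u₁ t - u₀ t) (φ (x, u₁ x) - φ (x, u₀ x)) x) ∧
      (∀ x ∈ I, HasDerivAt (fun t => φ (t, u₁ t) - φ (t, u₀ t))
        (-(κ x * (u₁ x - u₀ x))) x)) ∧
    ((∃ x ∈ I, u₀ x ≠ u₁ x) → ∃ x ∈ I, u₁ x - u₀ x ≠ 0) := by
  obtain ⟨⟨hy, hy'⟩, hne⟩ := stmt_11_general D hD hfib φ hφ κ hκ I u₀ u₁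
    hu₀D (fun x hx => (hu₀ x hx).hasDerivWithinAt) hu₁D (fun x hx => (hu₁ x hx).hasDerivWithinAt)
  exact ⟨⟨fun x hx => (hy x hx).hasDerivAt (hI.mem_nhds hx),
    fun x hx => (hy' x hx).hasDerivAt (hI.mem_nhds hx)⟩, hne⟩
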